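/- Let P be a normal logic program over its finite set of atoms a_1, …, a_n, let ⊗ be a t-norm and ⊕ a t-conorm, and let τ, φ ∈ [0,1]^n satisfy: τ = 𝒞_{P,φ}^∞(τ₀) for some τ₀ ≤ 𝒞_{P,φ}^∞(0) componentwise, the iteration of 𝒞_{P,φ} from the zero vector reaches 𝒞_{P,φ}^∞(0) after finitely many steps, and the membership score p defined by p_i = (τ_i + 1 − φ_i)/2 satisfies p ∈ {0,1}^n. Then the set [p] = { a_i : p_i = 1 } is a stable model of P. -/

import Mathlib

instance : Fact ((0:ℝ) ≤ 1) := ⟨zero_le_one⟩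

/-- A rule of a normal logic program: head atom, positive body atoms, default-negated body atoms. -/
structure Rule (α : Type) where
  head : α
  pos : Finset α
  neg : Finset α
deriving DecidableEq

/-- A t-norm on the unit interval: commutative, associative, monotone in each argument,
with unit `1`. -/
structure Tnorm where
  f : unitInterval → unitInterval → unitInterval
  comm : ∀ x y, f x y = f y x
  assoc : ∀ x y z, f (f x y) z = f x (f y z)
  mono : ∀ ⦃x x' y y'⦄, x ≤ x' → y ≤ y' → f x y ≤ f x' y'
  one_left : ∀ x, f 1 x = x

/-- A t-conorm on the unit interval: commutative, associative, monotone in each argument,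
with unit `0`. -/
structure Tconorm where
  f : unitInterval → unitInterval → unitInterval
  comm : ∀ x y, f x y = f y x
  assoc : ∀ x y z, f (f x y) z = f x (f y z)
  mono : ∀ ⦃x x' y y'⦄, x ≤ x' → y ≤ y' → f x y ≤ f x' y'
  zero_left : ∀ x, f 0 x = x

instance (t : Tnorm) : Std.Commutative t.f := ⟨t.comm⟩
instance (t : Tnorm) : Std.Associative t.f := ⟨t.assoc⟩
instance (s : Tconorm) : Std.Commutative s.f := ⟨s.comm⟩
instance (s : Tconorm) : Std.Associative s.f := ⟨s.assoc⟩

/-- ⊗-product of `g` over a finite set (empty product = `1`). -/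
def tnormProd {β : Type} (t : Tnorm) (g : β → unitInterval) (s : Finset β) : unitInterval :=
  s.fold t.f 1 g

/-- ⊕-sum of `g` over a finite set (empty sum = `0`). -/
def tconormSum {β : Type} (s : Tconorm) (g : β → unitInterval) (q : Finset β) : unitInterval :=
  q.fold s.f 0 g

/-- Support `ρ(τ,φ)` of a rule: the ⊗-product of the values of all its body literals,
where `val(a) = τ a` and `val(not a) = φ a`. -/
def support {α : Type} (t : Tnorm) (τ φ : α → unitInterval) (r : Rule α) : unitInterval :=
  t.f (tnormProd t τ r.pos) (tnormProd t φ r.neg)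

/-- The soft immediate consequence operator `𝒞_{P,φ}(τ)`: for each atom `a`, the ⊕-sum of
the supports of all rules with head `a`. -/
def softC {α : Type} [DecidableEq α] (t : Tnorm) (s : Tconorm) (P : Finset (Rule α))
    (φ τ : α → unitInterval) : α → unitInterval :=
  fun a => tconormSum s (support t τ φ) (P.filter fun r => r.head = a)

/-- The set induced by a degree vector: `[ψ] = { a | ψ a = 1 }`. -/
def induced {α : Type} (ψ : α → unitInterval) : Set α := { a | ψ a = 1 }

/-- The Gelfond–Lifschitz reduct `P^S`. -/
def reduct {α : Type} (P : Finset (Rule α)) (S : Set α) : Set (Rule α) :=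
  { r' | ∃ r ∈ P, (∀ b ∈ r.neg, b ∉ S) ∧ r' = ⟨r.head, r.pos, ∅⟩ }

/-- `M` is a model of the set of rules `Q`. -/
def isModel {α : Type} (Q : Set (Rule α)) (M : Set α) : Prop :=
  ∀ r ∈ Q, ↑r.pos ⊆ M → (∀ b ∈ r.neg, b ∉ M) → r.head ∈ M

/-- `S` is a stable model of `P`: `S` is the least model of the reduct `P^S`. -/
def isStableModel {α : Type} (P : Finset (Rule α)) (S : Set α) : Prop :=
  isModel (reduct P S) S ∧ ∀ M : Set α, isModel (reduct P S) M → S ⊆ M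

/-!
Write `χ_X` for the indicator of a set `X` of atoms and `S = [p]`. A binary score forces `τ = χ_S` and
`φ = χ_{Sᶜ}`, so that `φ` switches off exactly the rules which the reduct `P^S` deletes. Hence a model
`M` of `P^S` is a crisp pre-fixed point, `𝒞(χ_M) ≤ χ_M`, and since `𝒞` is monotone, `χ_M` bounds the
iterates from zero, then `τ₀`, then the iterates from `τ₀`, and finally `τ`: thus `S ⊆ M`. Conversely,
rule bodies are finite, so the atoms which reach degree `1` in the iteration from zero form a model
`M₀` of `P^S`. Monotonicity makes `τ` dominate that iteration, so `M₀ ⊆ S`, and therefore `S = M₀`.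
-/

open Filter
open scoped Topology

section MonotoneIteration

variable {β : Type*} {f : β → β} {x y z c : β}

theorem iterate_le_of_le_of_map_le [Preorder β] (hf : Monotone f) (hxc : x ≤ c) (hc : f c ≤ c)
    (k : ℕ) : f^[k] x ≤ c :=
  (hf.iterate k hxc).trans (hf.antitone_iterate_of_map_le hc k.zero_le)

theorem le_of_tendsto_iterate [Preorder β] [TopologicalSpace β] [ClosedIicTopology β]
    (hf : Monotone f) (hyc : y ≤ c) (hc : f c ≤ c)
    (hz : Tendsto (fun k => f^[k] y) atTop (𝓝 z)) : z ≤ c :=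
  le_of_tendsto' hz (iterate_le_of_le_of_map_le hf hyc hc)

theorem iterate_le_of_tendsto_iterate [Preorder β] [TopologicalSpace β] [ClosedIciTopology β]
    (hf : Monotone f) (hx : x ≤ f x) (hxy : x ≤ y)
    (hz : Tendsto (fun k => f^[k] y) atTop (𝓝 z)) (k : ℕ) : f^[k] x ≤ z :=
  ge_of_tendsto hz <| (eventually_ge_atTop k).mono fun j hkj =>
    (hf.monotone_iterate_of_le_map hx hkj).trans (hf.iterate j hxy)

end MonotoneIteration

section Norms

variable {β : Type} {t : Tnorm} {s : Tconorm} {g g' : β → unitInterval} {q : Finset β} {b : β}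

theorem Tnorm.apply_le_left (t : Tnorm) (x y : unitInterval) : t.f x y ≤ x :=
  calc
    t.f x y ≤ t.f x 1 := t.mono le_rfl unitInterval.le_one'
    _ = x := by rw [t.comm, t.one_left]

theorem Tnorm.apply_le_right (t : Tnorm) (x y : unitInterval) : t.f x y ≤ y :=
  t.comm x y ▸ t.apply_le_left y x

theorem Tconorm.left_le_apply (s : Tconorm) (x y : unitInterval) : x ≤ s.f x y :=
  calc
    x = s.f x 0 := by rw [s.comm, s.zero_left]
    _ ≤ s.f x y := s.mono le_rfl unitInterval.nonneg'

theorem tnormProd_mono (h : ∀ b ∈ q, g b ≤ g' b) : tnormProd t g q ≤ tnormProd t g' q := by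
  unfold tnormProd
  induction q using Finset.cons_induction with
  | empty => rfl
  | cons a q ha ih =>
    rw [Finset.forall_mem_cons] at h
    rw [Finset.fold_cons, Finset.fold_cons]
    exact t.mono h.1 (ih h.2)

theorem tnormProd_le (hb : b ∈ q) : tnormProd t g q ≤ g b := by
  classical
  rw [tnormProd, ← Finset.insert_erase hb, Finset.fold_insert (q.notMem_erase b)]
  exact t.apply_le_left _ _

theorem tnormProd_eq_one (h : ∀ b ∈ q, g b = 1) : tnormProd t g q = 1 := by
  classical
  rw [tnormProd, Finset.fold_congr h, Finset.fold_const 1 (by rw [t.one_left, t.one_left]),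
    t.one_left, ite_self]

theorem tconormSum_mono (h : ∀ b ∈ q, g b ≤ g' b) : tconormSum s g q ≤ tconormSum s g' q := by
  unfold tconormSum
  induction q using Finset.cons_induction with
  | empty => rfl
  | cons a q ha ih =>
    rw [Finset.forall_mem_cons] at h
    rw [Finset.fold_cons, Finset.fold_cons]
    exact s.mono h.1 (ih h.2)

theorem le_tconormSum (hb : b ∈ q) : g b ≤ tconormSum s g q := by
  classical
  rw [tconormSum, ← Finset.insert_erase hb, Finset.fold_insert (q.notMem_erase b)]
  exact s.left_le_apply _ _

theorem tconormSum_eq_zero (h : ∀ b ∈ q, g b = 0) : tconormSum s g q = 0 := by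
  classical
  rw [tconormSum, Finset.fold_congr h, Finset.fold_const 0 (by rw [s.zero_left, s.zero_left]),
    s.zero_left, ite_self]

end Norms

section Support

variable {α : Type} {t : Tnorm} {τ τ' φ : α → unitInterval} {r : Rule α} {b : α}

theorem support_mono (h : τ ≤ τ') : support t τ φ r ≤ support t τ' φ r :=
  t.mono (tnormProd_mono fun b _ => h b) le_rfl

theorem support_le_of_mem_pos (hb : b ∈ r.pos) : support t τ φ r ≤ τ b :=
  (t.apply_le_left _ _).trans (tnormProd_le hb)

theorem support_le_of_mem_neg (hb : b ∈ r.neg) : support t τ φ r ≤ φ b :=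
  (t.apply_le_right _ _).trans (tnormProd_le hb)

theorem support_eq_one (hpos : ∀ b ∈ r.pos, τ b = 1) (hneg : ∀ b ∈ r.neg, φ b = 1) :
    support t τ φ r = 1 := by
  rw [support, tnormProd_eq_one hpos, tnormProd_eq_one hneg, t.one_left]

end Support

section Induced

variable {α : Type}

theorem monotone_induced : Monotone (induced (α := α)) := fun _ _ h a ha =>
  le_antisymm unitInterval.le_one' (ha.symm.le.trans (h a))

theorem induced_indicator_one (M : Set α) : induced (M.indicator 1) = M := by
  ext a
  by_cases ha : a ∈ M <;> simp [induced, ha]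

end Induced

section StableModel

variable {α : Type} {t : Tnorm} {s : Tconorm} {P : Finset (Rule α)}
  {φ ψ τ τ₀ : α → unitInterval} {S M : Set α}

theorem isModel_reduct_iff :
    isModel (reduct P S) M ↔
      ∀ r ∈ P, (∀ b ∈ r.neg, b ∉ S) → ↑r.pos ⊆ M → r.head ∈ M := by
  constructor
  · intro hM r hr hneg hpos
    exact hM ⟨r.head, r.pos, ∅⟩ ⟨r, hr, hneg, rfl⟩ hpos
      fun b hb => absurd hb (Finset.notMem_empty b)
  · rintro hM _ ⟨r, hr, hneg, rfl⟩ hpos -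
    exact hM r hr hneg hpos

variable [DecidableEq α]

theorem softC_mono : Monotone (softC t s P φ) := fun _ _ h _ =>
  tconormSum_mono fun _ _ => support_mono h

theorem support_le_softC_head {r : Rule α} (hr : r ∈ P) :
    support t τ φ r ≤ softC t s P φ τ r.head :=
  le_tconormSum (Finset.mem_filter.2 ⟨hr, rfl⟩)

theorem softC_indicator_le_of_isModel_reduct (hφ : φ ≤ Sᶜ.indicator 1)
    (hM : isModel (reduct P S) M) : softC t s P φ (M.indicator 1) ≤ M.indicator 1 := by
  refine Set.le_indicator (fun a _ => unitInterval.le_one') fun a ha =>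
    (tconormSum_eq_zero fun r hr => ?_).le
  obtain ⟨hrP, rfl⟩ := Finset.mem_filter.1 hr
  refine le_antisymm ?_ unitInterval.nonneg'
  by_contra hsupp
  refine ha (isModel_reduct_iff.1 hM r hrP (fun b hb hbS => hsupp ?_) fun b hb => ?_)
  · calc
      support t (M.indicator 1) φ r ≤ φ b := support_le_of_mem_neg hb
      _ ≤ Sᶜ.indicator 1 b := hφ b
      _ = 0 := Set.indicator_of_notMem (not_not_intro hbS) 1
  · by_contra hbM
    exact hsupp ((support_le_of_mem_pos hb).trans_eq (Set.indicator_of_notMem hbM 1))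

theorem isModel_reduct_iUnion_induced_iterate (hφ : Sᶜ.indicator 1 ≤ φ)
    (hψ : ψ ≤ softC t s P φ ψ) :
    isModel (reduct P S) (⋃ k, induced ((softC t s P φ)^[k] ψ)) := by
  refine isModel_reduct_iff.2 fun r hr hneg hpos => ?_
  have hchain : Monotone fun k => induced ((softC t s P φ)^[k] ψ) :=
    monotone_induced.comp (softC_mono.monotone_iterate_of_le_map hψ)
  obtain ⟨k, hk⟩ := hchain.directed_le.exists_mem_subset_of_finset_subset_biUnion hpos
  have hneg_one : ∀ b ∈ r.neg, φ b = 1 := fun b hb =>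
    le_antisymm unitInterval.le_one' <|
      (Set.indicator_of_mem (hneg b hb : b ∈ Sᶜ) 1).symm.trans_le (hφ b)
  have hsupp : support t ((softC t s P φ)^[k] ψ) φ r = 1 := support_eq_one hk hneg_one
  refine Set.mem_iUnion.2 ⟨k + 1, le_antisymm unitInterval.le_one' ?_⟩
  rw [Function.iterate_succ_apply', ← hsupp]
  exact support_le_softC_head hr

theorem induced_subset_of_isModel_reduct (hφ : φ ≤ Sᶜ.indicator 1)
    (hτ₀ : τ₀ ≤ ⨆ k : ℕ, (softC t s P φ)^[k] 0)
    (hlim : Tendsto (fun k => (softC t s P φ)^[k] τ₀) atTop (𝓝 τ))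
    (hM : isModel (reduct P S) M) : induced τ ⊆ M := by
  have hpre := softC_indicator_le_of_isModel_reduct (t := t) (s := s) hφ hM
  have hτ₀M : τ₀ ≤ M.indicator 1 := hτ₀.trans <| iSup_le <|
    iterate_le_of_le_of_map_le softC_mono (fun _ => unitInterval.nonneg') hpre
  calc
    induced τ ⊆ induced (M.indicator 1) :=
      monotone_induced (le_of_tendsto_iterate softC_mono hτ₀M hpre hlim)
    _ = M := induced_indicator_one M

theorem isStableModel_induced (hφ : φ = (induced τ)ᶜ.indicator 1)
    (hτ₀ : τ₀ ≤ ⨆ k : ℕ, (softC t s P φ)^[k] 0)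
    (hlim : Tendsto (fun k => (softC t s P φ)^[k] τ₀) atTop (𝓝 τ)) :
    isStableModel P (induced τ) := by
  have hleast : ∀ M, isModel (reduct P (induced τ)) M → induced τ ⊆ M := fun M =>
    induced_subset_of_isModel_reduct hφ.le hτ₀ hlim
  have hzero : ∀ ψ : α → unitInterval, 0 ≤ ψ := fun _ _ => unitInterval.nonneg'
  have hmodel := isModel_reduct_iUnion_induced_iterate (t := t) (s := s) (P := P) hφ.ge (hzero _)
  have heq : ⋃ k, induced ((softC t s P φ)^[k] 0) = induced τ :=
    Set.Subset.antisymm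
      (Set.iUnion_subset fun k => monotone_induced <|
        iterate_le_of_tendsto_iterate softC_mono (hzero _) (hzero _) hlim k)
      (hleast _ hmodel)
  exact ⟨heq ▸ hmodel, hleast⟩

end StableModel

section MembershipScore

variable {x y : unitInterval}

theorem membershipScore_eq_one_iff : ((x : ℝ) + 1 - y) / 2 = 1 ↔ x = 1 ∧ y = 0 := by
  rw [← Set.Icc.coe_eq_one, ← Set.Icc.coe_eq_zero]
  constructor
  · intro h
    constructor <;> linarith [unitInterval.le_one x, unitInterval.nonneg y]
  · rintro ⟨hx, hy⟩
    norm_num [hx, hy]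

theorem membershipScore_eq_zero_iff : ((x : ℝ) + 1 - y) / 2 = 0 ↔ x = 0 ∧ y = 1 := by
  rw [← Set.Icc.coe_eq_one, ← Set.Icc.coe_eq_zero]
  constructor
  · intro h
    constructor <;> linarith [unitInterval.nonneg x, unitInterval.le_one y]
  · rintro ⟨hx, hy⟩
    norm_num [hx, hy]

end MembershipScore

theorem binary_terminal_state_yields_stable_model_general {α : Type} [DecidableEq α]
    (t : Tnorm) (s : Tconorm) (P : Finset (Rule α)) (τ φ τ₀ : α → unitInterval)
    (hτ₀ : τ₀ ≤ ⨆ k : ℕ, (softC t s P φ)^[k] (fun _ => 0))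
    (hlim : Tendsto (fun k => (softC t s P φ)^[k] τ₀) atTop (𝓝 τ))
    (hp : ∀ a, ((τ a : ℝ) + 1 - (φ a : ℝ)) / 2 = 0 ∨
               ((τ a : ℝ) + 1 - (φ a : ℝ)) / 2 = 1) :
    isStableModel P { a | ((τ a : ℝ) + 1 - (φ a : ℝ)) / 2 = 1 } := by
  simp only [membershipScore_eq_zero_iff, membershipScore_eq_one_iff] at hp ⊢
  have hS : { a | τ a = 1 ∧ φ a = 0 } = induced τ := by
    ext a
    rcases hp a with ⟨hτ, hφ⟩ | ⟨hτ, hφ⟩ <;> simp [induced, hτ, hφ]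
  have hφ : φ = (induced τ)ᶜ.indicator 1 := by
    ext a
    rcases hp a with ⟨hτ, hφ⟩ | ⟨hτ, hφ⟩ <;> simp [induced, hτ, hφ]
  rw [hS]
  exact isStableModel_induced hφ hτ₀ hlim

/-- If `τ = 𝒞_{P,φ}^∞(τ₀)` for some `τ₀ ≤ 𝒞_{P,φ}^∞(0)`, the
iteration from the zero vector stabilizes after finitely many steps, and the membership
score `p_i = (τ_i + 1 − φ_i)/2` is binary, then `[p]` is a stable model of `P`. -/
theorem binary_terminal_state_yields_stable_model {α : Type} [Fintype α] [DecidableEq α]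
    (t : Tnorm) (s : Tconorm) (P : Finset (Rule α)) (τ φ τ₀ : α → unitInterval)
    (hτ₀ : τ₀ ≤ ⨆ k : ℕ, (softC t s P φ)^[k] (fun _ => 0))
    (hlim : ∃ m : ℕ, ∀ k ≥ m, (softC t s P φ)^[k] τ₀ = τ)
    (hstab : ∃ m : ℕ,
      (softC t s P φ)^[m] (fun _ => 0) = ⨆ k : ℕ, (softC t s P φ)^[k] (fun _ => 0))
    (hp : ∀ a, ((τ a : ℝ) + 1 - (φ a : ℝ)) / 2 = 0 ∨
               ((τ a : ℝ) + 1 - (φ a : ℝ)) / 2 = 1) :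
    isStableModel P { a | ((τ a : ℝ) + 1 - (φ a : ℝ)) / 2 = 1 } := by
  obtain ⟨m, hm⟩ := hlim
  exact binary_terminal_state_yields_stable_model_general t s P τ φ τ₀ hτ₀
    (tendsto_atTop_of_eventually_const hm) hp
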